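/- (Action of the Lam generators on the concordance basis.) For every t ∈ ℝ, every i ∈ {1,…,2n}, and every non-crossing partition σ of {1̄,…,n̄}: if i is isolated in σ then (⋀^{n-1}U_i(t))(w_σ) = w_σ, and if i is not isolated in σ then (⋀^{n-1}U_i(t))(w_σ) = w_σ + t·w_{g_iσ}. Equivalently, each generator 𝔲_i of the Lam algebra maps a concordance vector either to another concordance vector or to zero. -/

import Mathlib

open scoped Classical

noncomputable section

/-- `P` is a set partition of the finite ground set `G` (of integers): its blocks are nonempty
subsets of `G`, and every element of `G` lies in exactly one block. -/
def IsPartitionOf (G : Finset ℕ) (P : Finset (Finset ℕ)) : Prop :=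
  (∀ B ∈ P, B.Nonempty) ∧ (∀ B ∈ P, B ⊆ G) ∧ ∀ x ∈ G, ∃! B, B ∈ P ∧ x ∈ B

/-- A collection of blocks is non-crossing: there are no `a < b < c < d` with `a, c` in one
block and `b, d` in a different block. -/
def NonCrossing (P : Finset (Finset ℕ)) : Prop :=
  ∀ a b c d : ℕ, a < b → b < c → c < d →
    ∀ B₁ ∈ P, ∀ B₂ ∈ P, a ∈ B₁ → c ∈ B₁ → b ∈ B₂ → d ∈ B₂ → B₁ = B₂

/-- The set `{1, 3, …, 2n-1}` of "barred" boundary indices `k̄ = 2k-1`. -/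
def oddSet (n : ℕ) : Finset ℕ := (Finset.range n).image fun k => 2 * k + 1

/-- The set `{2, 4, …, 2n}` of "tilde" boundary indices `k̃ = 2k`. -/
def evenSet (n : ℕ) : Finset ℕ := (Finset.range n).image fun k => 2 * k + 2

/-- `σ` is a non-crossing partition of `{1̄,…,n̄}` and `σd` is its dual: a non-crossing
partition of `{1̃,…,ñ}` such that the merged partition `σ ∪ σd` is non-crossing and the
numbers of blocks add up to `n + 1`. -/
def IsNCPair (n : ℕ) (σ σd : Finset (Finset ℕ)) : Prop :=
  IsPartitionOf (oddSet n) σ ∧ NonCrossing σ ∧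
    IsPartitionOf (evenSet n) σd ∧ NonCrossing σd ∧
    NonCrossing (σ ∪ σd) ∧ σ.card + σd.card = n + 1

/-- An `(n-1)`-element subset `I ⊆ {1,…,2n}` is concordant with `σ` if every block of `σ`
and every block of the dual `σd` contains exactly one element not in `I`. -/
def ConcordantWith (σ σd : Finset (Finset ℕ)) (I : Finset ℕ) : Prop :=
  ∀ B ∈ σ ∪ σd, (B \ I).card = 1

/-- `stdE n i` is the `i`-th standard basis vector (1-indexed) of `ℝ^{2n}`. -/
def stdE (n i : ℕ) : Fin (2 * n) → ℝ := fun t => if (t : ℕ) + 1 = i then 1 else 0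

/-- The wedge `e_{i_1} ∧ … ∧ e_{i_k}` over the increasing enumeration `i_1 < … < i_k`
of a finite set `I` of (1-indexed) indices. -/
def finsetWedge (n k : ℕ) (I : Finset ℕ) : ExteriorAlgebra ℝ (Fin (2 * n) → ℝ) :=
  ExteriorAlgebra.ιMulti ℝ k fun p => stdE n ((I.sort (· ≤ ·)).getD p.val 0)

/-- The concordance vector `w_σ = Σ_I e_I ∈ ⋀^{n-1} ℝ^{2n}`, the sum over all
`(n-1)`-element subsets `I` of `{1,…,2n}` concordant with `σ`. -/
def concVec (n : ℕ) (σ σd : Finset (Finset ℕ)) : ExteriorAlgebra ℝ (Fin (2 * n) → ℝ) :=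
  ∑ I ∈ ((Finset.Icc 1 (2 * n)).powersetCard (n - 1)).filter (ConcordantWith σ σd),
    finsetWedge n (n - 1) I

end
noncomputable section

open Matrix

/-- `i` (for odd `i = 2k-1`) is isolated in `σ` if `{k̄}` is a singleton block of `σ`;
for even `i = 2k`, `i` is isolated in `σ` if `{k̃}` is a singleton block of the dual `σd`. -/
def IsolatedIn (σ σd : Finset (Finset ℕ)) (i : ℕ) : Prop :=
  if i % 2 = 1 then {i} ∈ σ else {i} ∈ σd

/-- Remove `i` from its block and add `{i}` as a singleton block. -/
def isolate (P : Finset (Finset ℕ)) (i : ℕ) : Finset (Finset ℕ) :=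
  insert {i} (P.image fun B => B.erase i)

/-- The Lam algebra generator `𝔲_i` (1-indexed): `𝔲_i = E_{i,i+1} + E_{i,i-1}` for
`2 ≤ i ≤ 2n-1`, `𝔲_1 = E_{1,2} + (-1)^n E_{1,2n}`, `𝔲_{2n} = E_{2n,2n-1} + (-1)^n E_{2n,1}`. -/
def frakU (n i : ℕ) : Matrix (Fin (2 * n)) (Fin (2 * n)) ℝ :=
  fun a b =>
    if i = 1 then
      (if a.val = 0 ∧ b.val = 1 then (1 : ℝ) else 0) +
        (if a.val = 0 ∧ b.val = 2 * n - 1 then (-1 : ℝ) ^ n else 0)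
    else if i = 2 * n then
      (if a.val = 2 * n - 1 ∧ b.val = 2 * n - 2 then (1 : ℝ) else 0) +
        (if a.val = 2 * n - 1 ∧ b.val = 0 then (-1 : ℝ) ^ n else 0)
    else
      (if a.val + 1 = i ∧ b.val = i then (1 : ℝ) else 0) +
        (if a.val + 1 = i ∧ b.val + 2 = i then (1 : ℝ) else 0)

/-- The Lam group generator `u_i(t) = I + t·𝔲_i`. -/
def lamGen (n i : ℕ) (t : ℝ) : Matrix (Fin (2 * n)) (Fin (2 * n)) ℝ :=
  1 + t • frakU n i

/-- The linear map `U_i(t) : ℝ^{2n} → ℝ^{2n}`, `v ↦ u_i(t)ᵀ v` (the action of `u_i(t)` on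
row vectors by right multiplication). -/
def lamU (n i : ℕ) (t : ℝ) : (Fin (2 * n) → ℝ) →ₗ[ℝ] (Fin (2 * n) → ℝ) :=
  ((lamGen n i t)ᵀ).mulVecLin

end


/-! ### Combinatorial part -/

/-- `B` does not separate `x` and `y`. -/
def NSep (B : Finset ℕ) (x y : ℕ) : Prop :=
  ∀ u ∈ B, ∀ v ∈ B, ((x < u ↔ y < u) ↔ (x < v ↔ y < v))

/-- Weak pair: two partitions of the parity classes, not crossing each other. -/
structure WPair (n r : ℕ) (GA GC : Finset ℕ) (A C : Finset (Finset ℕ)) : Prop where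
  hr : r < 2
  mA : ∀ x, x ∈ GA ↔ (1 ≤ x ∧ x ≤ 2 * n) ∧ x % 2 = r
  mC : ∀ x, x ∈ GC ↔ (1 ≤ x ∧ x ≤ 2 * n) ∧ x % 2 ≠ r
  pA : IsPartitionOf GA A
  pC : IsPartitionOf GC C
  ns : ∀ B ∈ A, ∀ D ∈ C, ∀ x ∈ D, ∀ y ∈ D, NSep B x y

theorem NSep.trans {B : Finset ℕ} {x y z : ℕ} (h1 : NSep B x y) (h2 : NSep B y z) :
    NSep B x z := by
  intro u hu v hv
  have a := h1 u hu v hv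
  have b := h2 u hu v hv
  tauto

theorem NSep.symm {B : Finset ℕ} {x y : ℕ} (h1 : NSep B x y) : NSep B y x := by
  intro u hu v hv
  have a := h1 u hu v hv
  tauto

theorem NSep.mono {B B' : Finset ℕ} {x y : ℕ} (h1 : NSep B x y) (h : B' ⊆ B) : NSep B' x y :=
  fun u hu v hv => h1 u (h hu) v (h hv)

theorem part_eq {G : Finset ℕ} {P : Finset (Finset ℕ)} (h : IsPartitionOf G P)
    {B D : Finset ℕ} (hB : B ∈ P) (hD : D ∈ P) {x : ℕ} (xB : x ∈ B) (xD : x ∈ D) : B = D := by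
  obtain ⟨_, h2, h3⟩ := h
  exact (h3 x (h2 B hB xB)).unique ⟨hB, xB⟩ ⟨hD, xD⟩

theorem WPair.exists_block {n r : ℕ} {GA GC : Finset ℕ} {A C : Finset (Finset ℕ)}
    (h : WPair n r GA GC A C) (x : ℕ) (hx : 1 ≤ x ∧ x ≤ 2 * n) : ∃ B ∈ A ∪ C, x ∈ B := by
  by_cases hr : x % 2 = r
  · obtain ⟨B, ⟨h1, h2⟩, _⟩ := h.pA.2.2 x ((h.mA x).2 ⟨hx, hr⟩)
    exact ⟨B, Finset.mem_union_left _ h1, h2⟩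
  · obtain ⟨B, ⟨h1, h2⟩, _⟩ := h.pC.2.2 x ((h.mC x).2 ⟨hx, hr⟩)
    exact ⟨B, Finset.mem_union_right _ h1, h2⟩

theorem WPair.disj {n r : ℕ} {GA GC : Finset ℕ} {A C : Finset (Finset ℕ)}
    (h : WPair n r GA GC A C) {B D : Finset ℕ} (hB : B ∈ A) (hD : D ∈ C) {x : ℕ} (xB : x ∈ B)
    (xD : x ∈ D) : False :=
  ((h.mC x).1 (h.pC.2.1 D hD xD)).2 ((h.mA x).1 (h.pA.2.1 B hB xB)).2

theorem WPair.block_eq {n r : ℕ} {GA GC : Finset ℕ} {A C : Finset (Finset ℕ)}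
    (h : WPair n r GA GC A C) {B D : Finset ℕ} (hB : B ∈ A ∪ C) (hD : D ∈ A ∪ C) {x : ℕ}
    (xB : x ∈ B) (xD : x ∈ D) : B = D := by
  rcases Finset.mem_union.1 hB with hB | hB <;> rcases Finset.mem_union.1 hD with hD | hD
  · exact part_eq h.pA hB hD xB xD
  · exact (h.disj hB hD xB xD).elim
  · exact (h.disj hD hB xD xB).elim
  · exact part_eq h.pC hB hD xB xD

theorem WPair.lower {n r : ℕ} {GA GC : Finset ℕ} {A C : Finset (Finset ℕ)}
    (h : WPair n r GA GC A C) (hn : 1 ≤ n) : n + 1 ≤ A.card + C.card := by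
  have hex : ∀ x, ∃ B, (1 ≤ x ∧ x ≤ 2 * n) → B ∈ A ∪ C ∧ x ∈ B := by
    intro x
    by_cases hx : 1 ≤ x ∧ x ≤ 2 * n
    · obtain ⟨B, h1, h2⟩ := h.exists_block x hx
      exact ⟨B, fun _ => ⟨h1, h2⟩⟩
    · exact ⟨∅, fun h => (hx h).elim⟩
  choose f hf using hex
  have hcard : (A ∪ C).card ≤ A.card + C.card := Finset.card_union_le _ _
  set P := A ∪ C with hP
  let M1 := (Finset.Icc 1 (2 * n - 1)).filter (fun x => ∀ a ∈ f (x + 1), x + 1 ≤ a)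
  let M2 := (Finset.Icc 1 (2 * n - 1)).filter (fun x => ∀ a ∈ f x, a ≤ x)
  have h1 : M1.card ≤ (P.erase (f 1)).card := by
    apply Finset.card_le_card_of_injOn (fun x => f (x + 1))
    · intro x hx
      simp only [M1, Finset.coe_filter, Finset.mem_Icc, Set.mem_ofPred_eq] at hx
      have hx1 := hf (x + 1) (by omega)
      simp only [Finset.coe_erase, Set.mem_sdiff, Finset.mem_coe, Set.mem_singleton_iff]
      refine ⟨hx1.1, fun e => ?_⟩
      have := hx.2 1 (by rw [e]; exact (hf 1 (by omega)).2)
      omega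
    · intro x hx y hy e
      simp only [M1, Finset.coe_filter, Finset.mem_Icc, Set.mem_ofPred_eq] at hx hy
      simp only at e
      have a := hx.2 (y + 1) (by rw [e]; exact (hf (y + 1) (by omega)).2)
      have b := hy.2 (x + 1) (by rw [← e]; exact (hf (x + 1) (by omega)).2)
      omega
  have h2 : M2.card ≤ (P.erase (f (2 * n))).card := by
    apply Finset.card_le_card_of_injOn (fun x => f x)
    · intro x hx
      simp only [M2, Finset.coe_filter, Finset.mem_Icc, Set.mem_ofPred_eq] at hx
      have hx1 := hf x (by omega)
      simp only [Finset.coe_erase, Set.mem_sdiff, Finset.mem_coe, Set.mem_singleton_iff]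
      refine ⟨hx1.1, fun e => ?_⟩
      have := hx.2 (2 * n) (by rw [e]; exact (hf (2 * n) (by omega)).2)
      omega
    · intro x hx y hy e
      simp only [M2, Finset.coe_filter, Finset.mem_Icc, Set.mem_ofPred_eq] at hx hy
      simp only at e
      have a := hx.2 y (by rw [e]; exact (hf y (by omega)).2)
      have b := hy.2 x (by rw [← e]; exact (hf x (by omega)).2)
      omega
  rw [Finset.card_erase_of_mem (hf 1 (by omega)).1] at h1
  rw [Finset.card_erase_of_mem (hf (2 * n) (by omega)).1] at h2
  have h3 : (Finset.Icc 1 (2 * n - 1)) ⊆ M1 ∪ M2 := by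
    intro x hx
    have hx' := Finset.mem_Icc.1 hx
    by_contra hcon
    simp only [M1, M2, Finset.mem_union, Finset.mem_filter, hx, true_and, not_or] at hcon
    push Not at hcon
    obtain ⟨⟨a, ha, hax⟩, ⟨d, hd, hdx⟩⟩ := hcon
    obtain ⟨p1, q1⟩ := hf x (by omega)
    obtain ⟨p2, q2⟩ := hf (x + 1) (by omega)
    have mem : ∀ B ∈ P, B ∈ A ∨ B ∈ C := fun B hB => Finset.mem_union.1 hB
    rcases mem _ p1 with p1 | p1 <;> rcases mem _ p2 with p2 | p2
    · have u := ((h.mA x).1 (h.pA.2.1 _ p1 q1)).2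
      have v := ((h.mA (x+1)).1 (h.pA.2.1 _ p2 q2)).2
      omega
    · have hax' : a ≠ x := fun e => h.disj p1 p2 q1 (e ▸ ha)
      have := h.ns _ p1 _ p2 a ha (x + 1) q2 x q1 d hd
      have hdx' : d ≠ x + 1 := fun e => h.disj p1 p2 (e ▸ hd) q2
      omega
    · have hax' : a ≠ x := fun e => h.disj p2 p1 (e ▸ ha) q1
      have := h.ns _ p2 _ p1 x q1 d hd a ha (x + 1) q2
      have hdx' : d ≠ x + 1 := fun e => h.disj p2 p1 q2 (e ▸ hd)
      omega
    · have u := ((h.mC x).1 (h.pC.2.1 _ p1 q1))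
      have v := ((h.mC (x+1)).1 (h.pC.2.1 _ p2 q2))
      have hr := h.hr
      omega
  have h4 := Finset.card_le_card h3
  have h5 := Finset.card_union_le M1 M2
  simp only [Nat.card_Icc] at h4
  omega

/-- Merge two blocks. -/
def mergeB (C : Finset (Finset ℕ)) (D E : Finset ℕ) : Finset (Finset ℕ) :=
  insert (D ∪ E) ((C.erase D).erase E)

theorem mergeB_card {C : Finset (Finset ℕ)} {D E : Finset ℕ} (hD : D ∈ C) (hE : E ∈ C)
    (hne : D ≠ E) : (mergeB C D E).card + 1 ≤ C.card := by
  have h1 := Finset.card_insert_le (D ∪ E) ((C.erase D).erase E)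
  have h2 := Finset.card_erase_of_mem (Finset.mem_erase.2 ⟨hne.symm, hE⟩ : E ∈ C.erase D)
  have h3 := Finset.card_erase_of_mem hD
  have h4 : 0 < (C.erase D).card := Finset.card_pos.2 ⟨E, Finset.mem_erase.2 ⟨hne.symm, hE⟩⟩
  unfold mergeB
  omega

theorem mergeB_part {G : Finset ℕ} {C : Finset (Finset ℕ)} {D E : Finset ℕ}
    (h : IsPartitionOf G C) (hD : D ∈ C) (hE : E ∈ C) : IsPartitionOf G (mergeB C D E) := by
  have key := @part_eq G C h
  obtain ⟨h1, h2, h3⟩ := h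
  have mem : ∀ B, B ∈ mergeB C D E ↔ B = D ∪ E ∨ (B ≠ E ∧ B ≠ D ∧ B ∈ C) := by
    intro B
    simp [mergeB]
  refine ⟨fun B hB => ?_, fun B hB => ?_, fun x hx => ?_⟩
  · rcases (mem B).1 hB with rfl | ⟨_, _, hB⟩
    · exact (h1 D hD).mono Finset.subset_union_left
    · exact h1 B hB
  · rcases (mem B).1 hB with rfl | ⟨_, _, hB⟩
    · exact Finset.union_subset (h2 D hD) (h2 E hE)
    · exact h2 B hB
  · obtain ⟨B, ⟨hB, hxB⟩, hu⟩ := h3 x hx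
    by_cases hc : B = D ∨ B = E
    · refine ⟨D ∪ E, ⟨(mem _).2 (Or.inl rfl), ?_⟩, ?_⟩
      · rcases hc with rfl | rfl <;> simp [hxB]
      · rintro F ⟨hF, hxF⟩
        rcases (mem F).1 hF with rfl | ⟨a, b, hF⟩
        · rfl
        · have := key hF hB hxF hxB
          subst this
          tauto
    · push Not at hc
      refine ⟨B, ⟨(mem _).2 (Or.inr ⟨hc.2, hc.1, hB⟩), hxB⟩, ?_⟩
      rintro F ⟨hF, hxF⟩
      rcases (mem F).1 hF with rfl | ⟨a, b, hF⟩
      · rcases Finset.mem_union.1 hxF with hx' | hx'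
        · exact (hc.1 (key hB hD hxB hx')).elim
        · exact (hc.2 (key hB hE hxB hx')).elim
      · exact key hF hB hxF hxB

theorem WPair.same {n r : ℕ} {GA GC : Finset ℕ} {A C : Finset (Finset ℕ)}
    (h : WPair n r GA GC A C) (hn : 1 ≤ n) (hc : A.card + C.card = n + 1)
    {D E : Finset ℕ} (hD : D ∈ C) (hE : E ∈ C) {x y : ℕ} (hx : x ∈ D) (hy : y ∈ E)
    (hxy : ∀ B ∈ A, NSep B x y) : D = E := by
  by_contra hne
  have hw : WPair n r GA GC A (mergeB C D E) := by
    refine ⟨h.hr, h.mA, h.mC, h.pA, mergeB_part h.pC hD hE, ?_⟩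
    intro B hB F hF a ha b hb
    rcases Finset.mem_insert.1 hF with rfl | hF
    · have toX : ∀ z ∈ D ∪ E, NSep B z x := by
        intro z hz
        rcases Finset.mem_union.1 hz with hz | hz
        · exact h.ns B hB D hD z hz x hx
        · exact (h.ns B hB E hE z hz y hy).trans (hxy B hB).symm
      exact (toX a ha).trans (toX b hb).symm
    · exact h.ns B hB F (Finset.mem_of_mem_erase (Finset.mem_of_mem_erase hF)) a ha b hb
  have h1 := hw.lower hn
  have h2 := mergeB_card hD hE hne
  omega

theorem refine_eq {G : Finset ℕ} {M C : Finset (Finset ℕ)} (hM : IsPartitionOf G M)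
    (hC : IsPartitionOf G C) (hr : ∀ B ∈ M, ∃ D ∈ C, B ⊆ D) (hcard : M.card ≤ C.card) :
    M = C := by
  have hr' : ∀ B, ∃ D, B ∈ M → D ∈ C ∧ B ⊆ D := by
    intro B
    by_cases hB : B ∈ M
    · obtain ⟨D, h1, h2⟩ := hr B hB
      exact ⟨D, fun _ => ⟨h1, h2⟩⟩
    · exact ⟨∅, fun h => (hB h).elim⟩
  choose f hf using hr'
  have hs : Set.SurjOn f M C := by
    intro D hD
    obtain ⟨x, hx⟩ := hC.1 D hD
    obtain ⟨B, ⟨hB, hxB⟩, _⟩ := hM.2.2 x (hC.2.1 D hD hx)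
    exact ⟨B, hB, part_eq hC (hf B hB).1 hD ((hf B hB).2 hxB) hx⟩
  have hi : Set.InjOn f M :=
    Finset.injOn_of_surjOn_of_card_le f (fun B hB => (hf B hB).1) hs hcard
  have hid : ∀ B ∈ M, f B = B := by
    intro B hB
    apply Finset.Subset.antisymm _ (hf B hB).2
    intro x hx
    obtain ⟨B', ⟨hB', hxB'⟩, _⟩ := hM.2.2 x (hC.2.1 _ (hf B hB).1 hx)
    have : f B' = f B := part_eq hC (hf B' hB').1 (hf B hB).1 ((hf B' hB').2 hxB') hx
    rw [← hi hB' hB this]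
    exact hxB'
  apply Finset.Subset.antisymm
  · intro B hB
    rw [← hid B hB]
    exact (hf B hB).1
  · intro D hD
    obtain ⟨B, hB, rfl⟩ := hs hD
    rw [hid B hB]
    exact hB

/-- Cyclic successor. -/
def cyS (n i : ℕ) : ℕ := if i = 2 * n then 1 else i + 1

/-- Cyclic predecessor. -/
def cyP (n i : ℕ) : ℕ := if i = 1 then 2 * n else i - 1

/-- Structural description of the blocks before and after isolating `i`. -/
theorem structure_lemma {n r : ℕ} {GA GC : Finset ℕ} {A C A' C' : Finset (Finset ℕ)}
    (h : WPair n r GA GC A C) (h' : WPair n r GA GC A' C') (hn : 2 ≤ n)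
    (hc : A.card + C.card = n + 1) (hc' : A'.card + C'.card = n + 1)
    {i : ℕ} (hi : 1 ≤ i ∧ i ≤ 2 * n) (hir : i % 2 = r) (hiA : {i} ∉ A)
    (hA' : A' = isolate A i) :
    ∃ B₀ Cp Cq : Finset ℕ, ∃ R : Finset (Finset ℕ),
      (∀ B, B ∈ A ∪ C ↔ B = B₀ ∨ B = Cp ∨ B = Cq ∨ B ∈ R) ∧
      (∀ B, B ∈ A' ∪ C' ↔ B = {i} ∨ B = B₀.erase i ∨ B = Cp ∪ Cq ∨ B ∈ R) ∧
      i ∈ B₀ ∧ cyP n i ∈ Cp ∧ cyS n i ∈ Cq ∧ i ∉ Cp ∧ i ∉ Cq ∧ Disjoint Cp Cq ∧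
      cyP n i ∉ B₀ ∧ cyS n i ∉ B₀ ∧
      (∀ B ∈ R, i ∉ B ∧ cyP n i ∉ B ∧ cyS n i ∉ B) := by
  have hr := h.hr
  have hp : cyP n i ∈ GC := by
    rw [h.mC]; unfold cyP; split_ifs <;> omega
  have hq : cyS n i ∈ GC := by
    rw [h.mC]; unfold cyS; split_ifs <;> omega
  obtain ⟨B₀, ⟨hB₀, hiB₀⟩, _⟩ := h.pA.2.2 i ((h.mA i).2 ⟨hi, hir⟩)
  obtain ⟨Cp, ⟨hCp, hpCp⟩, _⟩ := h.pC.2.2 _ hp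
  obtain ⟨Cq, ⟨hCq, hqCq⟩, _⟩ := h.pC.2.2 _ hq
  -- nontrivial block
  obtain ⟨j, hj, hji⟩ : ∃ j ∈ B₀, j ≠ i := by
    by_contra hcon
    push Not at hcon
    apply hiA
    have : B₀ = {i} := by
      ext y
      rw [Finset.mem_singleton]
      exact ⟨hcon y, fun e => e ▸ hiB₀⟩
    rwa [← this]
  have hjr := (h.mA j).1 (h.pA.2.1 _ hB₀ hj)
  have hne : Cp ≠ Cq := by
    rintro rfl
    have := h.ns B₀ hB₀ Cp hCp _ hpCp _ hqCq i hiB₀ j hj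
    unfold cyP cyS at this
    split_ifs at this <;> omega
  have hA'mem : ∀ B, B ∈ A' ↔ B = {i} ∨ B = B₀.erase i ∨ (B ∈ A ∧ B ≠ B₀) := by
    intro B
    rw [hA']
    simp only [isolate, Finset.mem_insert, Finset.mem_image]
    have her : ∀ F ∈ A, F ≠ B₀ → F.erase i = F := fun F hF hFB =>
      Finset.erase_eq_of_notMem fun hiF => hFB (part_eq h.pA hF hB₀ hiF hiB₀)
    constructor
    · rintro (h | ⟨F, hF, rfl⟩)
      · exact Or.inl h
      · by_cases hFB : F = B₀
        · rw [hFB]; exact Or.inr (Or.inl rfl)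
        · rw [her F hF hFB]; exact Or.inr (Or.inr ⟨hF, hFB⟩)
    · rintro (h | rfl | ⟨hF, hFB⟩)
      · exact Or.inl h
      · exact Or.inr ⟨B₀, hB₀, rfl⟩
      · exact Or.inr ⟨B, hF, her B hF hFB⟩
  have hns' : ∀ x y, (∀ B ∈ A, NSep B x y) → ∀ B ∈ A', NSep B x y := by
    intro x y hxy B hB
    rcases (hA'mem B).1 hB with rfl | rfl | ⟨hB, _⟩
    · intro u hu v hv
      rw [Finset.mem_singleton] at hu hv
      subst hu; subst hv; rfl
    · exact (hxy B₀ hB₀).mono (Finset.erase_subset _ _)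
    · exact hxy B hB
  have hpq : ∀ B ∈ A', NSep B (cyP n i) (cyS n i) := by
    intro B hB u hu v hv
    have hur := (h'.mA u).1 (h'.pA.2.1 _ hB hu)
    have hvr := (h'.mA v).1 (h'.pA.2.1 _ hB hv)
    by_cases hiB : i ∈ B
    · have : B = {i} := part_eq h'.pA hB ((hA'mem {i}).2 (Or.inl rfl)) hiB
        (Finset.mem_singleton_self i)
      subst this
      rw [Finset.mem_singleton] at hu hv
      subst hu; subst hv; rfl
    · have hui : u ≠ i := fun e => hiB (e ▸ hu)
      have hvi : v ≠ i := fun e => hiB (e ▸ hv)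
      unfold cyP cyS
      split_ifs <;> omega
  have hsub : ∀ D ∈ C, ∀ x ∈ D, ∀ E ∈ C', x ∈ E → D ⊆ E := by
    intro D hD x hx E hE hxE y hy
    obtain ⟨F, ⟨hF, hyF⟩, _⟩ := h'.pC.2.2 y (h.pC.2.1 D hD hy)
    have : E = F := h'.same (by omega) hc' hE hF hxE hyF
      (hns' x y fun B hB => h.ns B hB D hD x hx y hy)
    rwa [this]
  have hC' : mergeB C Cp Cq = C' := by
    apply refine_eq (mergeB_part h.pC hCp hCq) h'.pC
    · intro B hB
      rcases Finset.mem_insert.1 hB with rfl | hB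
      · obtain ⟨E, ⟨hE, hpE⟩, _⟩ := h'.pC.2.2 _ hp
        obtain ⟨F, ⟨hF, hqF⟩, _⟩ := h'.pC.2.2 _ hq
        have : E = F := h'.same (by omega) hc' hE hF hpE hqF hpq
        subst this
        exact ⟨E, hE, Finset.union_subset (hsub _ hCp _ hpCp _ hE hpE)
          (hsub _ hCq _ hqCq _ hE hqF)⟩
      · have hB := Finset.mem_of_mem_erase (Finset.mem_of_mem_erase hB)
        obtain ⟨x, hx⟩ := h.pC.1 B hB
        obtain ⟨E, ⟨hE, hxE⟩, _⟩ := h'.pC.2.2 x (h.pC.2.1 B hB hx)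
        exact ⟨E, hE, hsub B hB x hx E hE hxE⟩
    · have h1 := mergeB_card hCp hCq hne
      have h2 : A'.card ≤ A.card + 1 := by
        rw [hA']
        exact (Finset.card_insert_le _ _).trans (Nat.succ_le_succ Finset.card_image_le)
      omega
  have iC : ∀ D ∈ C, i ∉ D := fun D hD hiD => h.disj hB₀ hD hiB₀ hiD
  have AC : ∀ B ∈ A, ∀ x ∈ GC, x ∉ B := fun B hB x hx hxB =>
    ((h.mC x).1 hx).2 ((h.mA x).1 (h.pA.2.1 B hB hxB)).2
  refine ⟨B₀, Cp, Cq, A.erase B₀ ∪ (C.erase Cp).erase Cq, ?_, ?_, hiB₀, hpCp, hqCq, iC _ hCp,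
    iC _ hCq, ?_, AC _ hB₀ _ hp, AC _ hB₀ _ hq, ?_⟩
  · intro B
    simp only [Finset.mem_union, Finset.mem_erase]
    constructor
    · intro hB
      by_cases e1 : B = B₀ <;> by_cases e2 : B = Cp <;> by_cases e3 : B = Cq <;> tauto
    · rintro (rfl | rfl | rfl | hB) <;> tauto
  · intro B
    rw [← hC', Finset.mem_union, hA'mem]
    simp only [mergeB, Finset.mem_insert, Finset.mem_union, Finset.mem_erase]
    tauto
  · rw [Finset.disjoint_left]
    intro x hx hx'
    exact hne (part_eq h.pC hCp hCq hx hx')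
  · intro B hB
    rcases Finset.mem_union.1 hB with hB | hB
    · obtain ⟨hB1, hB⟩ := Finset.mem_erase.1 hB
      exact ⟨fun hiB => hB1 (part_eq h.pA hB hB₀ hiB hiB₀), AC _ hB _ hp, AC _ hB _ hq⟩
    · obtain ⟨hB1, hB2⟩ := Finset.mem_erase.1 hB
      obtain ⟨hB2, hB⟩ := Finset.mem_erase.1 hB2
      exact ⟨iC _ hB, fun hx => hB2 (part_eq h.pC hB hCp hx hpCp),
        fun hx => hB1 (part_eq h.pC hB hCq hx hqCq)⟩

theorem nsep_of_nc {B D : Finset ℕ} {P : Finset (Finset ℕ)} (hP : NonCrossing P) (hB : B ∈ P)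
    (hD : D ∈ P) (hdis : ∀ x ∈ B, x ∉ D) {x y : ℕ} (hx : x ∈ D) (hy : y ∈ D) : NSep B x y := by
  have hBD : ∀ z ∈ B, B ≠ D := fun z hz e => hdis z hz (e ▸ hz)
  have key : ∀ x ∈ D, ∀ y ∈ D, ∀ u ∈ B, ∀ v ∈ B, x < u → u < y → (v < x ∨ y < v) → False := by
    intro x hx y hy u hu v hv h1 h2 h3
    rcases h3 with h3 | h3
    · exact hBD u hu (hP v x u y h3 h1 h2 B hB D hD hv hu hx hy)
    · exact hBD u hu (hP x u y v h1 h2 h3 D hD B hB hx hy hu hv).symm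
  intro u hu v hv
  have n1 : u ≠ x := fun e => hdis u hu (e ▸ hx)
  have n2 : u ≠ y := fun e => hdis u hu (e ▸ hy)
  have n3 : v ≠ x := fun e => hdis v hv (e ▸ hx)
  have n4 : v ≠ y := fun e => hdis v hv (e ▸ hy)
  have key' : ∀ x ∈ D, ∀ y ∈ D, ∀ u ∈ B, ∀ v ∈ B,
      ¬ (x < u ∧ u < y ∧ (v < x ∨ y < v)) :=
    fun x hx y hy u hu v hv h => key x hx y hy u hu v hv h.1 h.2.1 h.2.2
  have k1 := key' x hx y hy u hu v hv
  have k2 := key' y hy x hx u hu v hv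
  have k3 := key' x hx y hy v hv u hu
  have k4 := key' y hy x hx v hv u hu
  omega

theorem mem_oddSet (n x : ℕ) : x ∈ oddSet n ↔ (1 ≤ x ∧ x ≤ 2 * n) ∧ x % 2 = 1 := by
  simp only [oddSet, Finset.mem_image, Finset.mem_range]
  constructor
  · rintro ⟨k, hk, rfl⟩; omega
  · intro h; exact ⟨x / 2, by omega, by omega⟩

theorem mem_evenSet (n x : ℕ) : x ∈ evenSet n ↔ (1 ≤ x ∧ x ≤ 2 * n) ∧ x % 2 = 0 := by
  simp only [evenSet, Finset.mem_image, Finset.mem_range]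
  constructor
  · rintro ⟨k, hk, rfl⟩; omega
  · intro h; exact ⟨x / 2 - 1, by omega, by omega⟩

theorem wpair_odd {n : ℕ} {σ σd : Finset (Finset ℕ)} (h : IsNCPair n σ σd) :
    WPair n 1 (oddSet n) (evenSet n) σ σd := by
  obtain ⟨h1, _, h3, _, h5, _⟩ := h
  refine ⟨by omega, mem_oddSet n, fun x => ?_, h1, h3, ?_⟩
  · rw [mem_evenSet]; omega
  · intro B hB D hD x hx y hy
    refine nsep_of_nc h5 (Finset.mem_union_left _ hB) (Finset.mem_union_right _ hD) ?_ hx hy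
    intro z hz hz'
    have a := (mem_oddSet n z).1 (h1.2.1 B hB hz)
    have b := (mem_evenSet n z).1 (h3.2.1 D hD hz')
    omega

theorem wpair_even {n : ℕ} {σ σd : Finset (Finset ℕ)} (h : IsNCPair n σ σd) :
    WPair n 0 (evenSet n) (oddSet n) σd σ := by
  obtain ⟨h1, _, h3, _, h5, _⟩ := h
  refine ⟨by omega, mem_evenSet n, fun x => ?_, h3, h1, ?_⟩
  · rw [mem_oddSet]; omega
  · intro B hB D hD x hx y hy
    refine nsep_of_nc h5 (Finset.mem_union_right _ hB) (Finset.mem_union_left _ hD) ?_ hx hy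
    intro z hz hz'
    have a := (mem_evenSet n z).1 (h3.2.1 B hB hz)
    have b := (mem_oddSet n z).1 (h1.2.1 D hD hz')
    omega

/-- Bijection of index sets. -/
theorem sum_half {M : Type*} [AddCommMonoid M] (e : Finset ℕ → M) (n k i q : ℕ)
    {σ σd τ τd : Finset (Finset ℕ)}
    {B₀ Cp Cq : Finset ℕ} {R : Finset (Finset ℕ)}
    (h1 : ∀ B, B ∈ σ ∪ σd ↔ B = B₀ ∨ B = Cp ∨ B = Cq ∨ B ∈ R)
    (h2 : ∀ B, B ∈ τ ∪ τd ↔ B = {i} ∨ B = B₀.erase i ∨ B = Cp ∪ Cq ∨ B ∈ R)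
    (hi : i ∈ Finset.Icc 1 (2 * n)) (hq : q ∈ Finset.Icc 1 (2 * n))
    (hiB : i ∈ B₀) (hqC : q ∈ Cq) (hip : i ∉ Cp) (hiq : i ∉ Cq) (hd : Disjoint Cp Cq)
    (hqB : q ∉ B₀) (hR : ∀ B ∈ R, i ∉ B ∧ q ∉ B) :
    ∑ I ∈ (((Finset.Icc 1 (2 * n)).powersetCard k).filter (ConcordantWith σ σd)).filter
        (fun I => i ∈ I ∧ q ∉ I), e (insert q (I.erase i)) =
    ∑ J ∈ (((Finset.Icc 1 (2 * n)).powersetCard k).filter (ConcordantWith τ τd)).filter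
        (fun J => Cq ⊆ J), e J := by
  have hiq' : i ≠ q := fun h => hqB (h ▸ hiB)
  have hqp : q ∉ Cp := fun h => Finset.disjoint_left.1 hd h hqC
  have conc1 : ∀ I, ConcordantWith σ σd I ↔ (B₀ \ I).card = 1 ∧ (Cp \ I).card = 1 ∧
      (Cq \ I).card = 1 ∧ ∀ B ∈ R, (B \ I).card = 1 := by
    intro I
    unfold ConcordantWith
    simp only [h1]
    constructor
    · intro h
      exact ⟨h _ (by simp), h _ (by simp), h _ (by simp), fun B hB => h B (by simp [hB])⟩
    · rintro ⟨a, b, c, d⟩ B (rfl | rfl | rfl | hB)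
      exacts [a, b, c, d B hB]
  have conc2 : ∀ I, ConcordantWith τ τd I ↔ ((({i} : Finset ℕ)) \ I).card = 1 ∧
      ((B₀.erase i) \ I).card = 1 ∧
      ((Cp ∪ Cq) \ I).card = 1 ∧ ∀ B ∈ R, (B \ I).card = 1 := by
    intro I
    unfold ConcordantWith
    simp only [h2]
    constructor
    · intro h
      exact ⟨h _ (by simp), h _ (by simp), h _ (by simp), fun B hB => h B (by simp [hB])⟩
    · rintro ⟨a, b, c, d⟩ B (rfl | rfl | rfl | hB)
      exacts [a, b, c, d B hB]
  have hmemR : ∀ B ∈ R, ∀ z ∈ B, z ≠ i ∧ z ≠ q := fun B hB z hz =>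
    ⟨fun h => (hR B hB).1 (h ▸ hz), fun h => (hR B hB).2 (h ▸ hz)⟩
  refine Finset.sum_bij' (fun I _ => insert q (I.erase i)) (fun J _ => insert i (J.erase q))
    ?_ ?_ ?_ ?_ ?_
  · intro I hI
    simp only [Finset.mem_filter, Finset.mem_powersetCard, conc1] at hI
    obtain ⟨⟨⟨hsub, hcard⟩, c1, c2, c3, c4⟩, hiI, hqI⟩ := hI
    simp only [Finset.mem_filter, Finset.mem_powersetCard, conc2]
    have hCq : ∀ z ∈ Cq, z ∉ I → z = q := by
      intro z hz hzI
      obtain ⟨w, hw⟩ := Finset.card_eq_one.1 c3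
      have a : z ∈ Cq \ I := Finset.mem_sdiff.2 ⟨hz, hzI⟩
      have b : q ∈ Cq \ I := Finset.mem_sdiff.2 ⟨hqC, hqI⟩
      rw [hw, Finset.mem_singleton] at a b
      rw [a, b]
    refine ⟨⟨⟨?_, ?_⟩, ?_, ?_, ?_, ?_⟩, ?_⟩
    · exact Finset.insert_subset hq ((Finset.erase_subset _ _).trans hsub)
    · rw [Finset.card_insert_of_notMem (by simp [hqI]), Finset.card_erase_of_mem hiI]
      have : 0 < I.card := Finset.card_pos.2 ⟨i, hiI⟩
      omega
    · rw [Finset.card_eq_one]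
      refine ⟨i, ?_⟩
      ext z
      simp only [Finset.mem_sdiff, Finset.mem_singleton, Finset.mem_insert, Finset.mem_erase]
      grind
    · rw [← c1]
      congr 1
      ext z
      simp only [Finset.mem_sdiff, Finset.mem_insert, Finset.mem_erase]
      grind
    · rw [← c2]
      congr 1
      ext z
      simp only [Finset.mem_sdiff, Finset.mem_insert, Finset.mem_erase, Finset.mem_union]
      grind
    · intro B hB
      rw [← c4 B hB]
      congr 1
      ext z
      have := hmemR B hB z
      simp only [Finset.mem_sdiff, Finset.mem_insert, Finset.mem_erase]
      grind
    · intro z hz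
      simp only [Finset.mem_insert, Finset.mem_erase]
      grind
  · intro J hJ
    simp only [Finset.mem_filter, Finset.mem_powersetCard, conc2] at hJ
    obtain ⟨⟨⟨hsub, hcard⟩, c1, c2, c3, c4⟩, hCJ⟩ := hJ
    have hiJ : i ∉ J := by
      intro h
      rw [Finset.sdiff_eq_empty_iff_subset.2 (Finset.singleton_subset_iff.2 h)] at c1
      simp at c1
    have hqJ := hCJ hqC
    simp only [Finset.mem_filter, Finset.mem_powersetCard, conc1]
    refine ⟨⟨⟨?_, ?_⟩, ?_, ?_, ?_, ?_⟩, ?_, ?_⟩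
    · exact Finset.insert_subset hi ((Finset.erase_subset _ _).trans hsub)
    · rw [Finset.card_insert_of_notMem (by simp [hiJ]), Finset.card_erase_of_mem hqJ]
      have : 0 < J.card := Finset.card_pos.2 ⟨q, hqJ⟩
      omega
    · rw [← c2]
      congr 1
      ext z
      simp only [Finset.mem_sdiff, Finset.mem_insert, Finset.mem_erase]
      grind
    · rw [← c3]
      congr 1
      ext z
      have := @hCJ z
      simp only [Finset.mem_sdiff, Finset.mem_insert, Finset.mem_erase, Finset.mem_union]
      grind
    · rw [Finset.card_eq_one]
      refine ⟨q, ?_⟩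
      ext z
      have := @hCJ z
      simp only [Finset.mem_sdiff, Finset.mem_singleton, Finset.mem_insert, Finset.mem_erase]
      grind
    · intro B hB
      rw [← c4 B hB]
      congr 1
      ext z
      have := hmemR B hB z
      simp only [Finset.mem_sdiff, Finset.mem_insert, Finset.mem_erase]
      grind
    · simp
    · simp [hiq'.symm]
  · intro I hI
    simp only [Finset.mem_filter] at hI
    rw [Finset.erase_insert (by simp [hI.2.2]), Finset.insert_erase hI.2.1]
  · intro J hJ
    simp only [Finset.mem_filter, conc2] at hJ
    have hiJ : i ∉ J := by
      intro h
      have c1 := hJ.1.2.1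
      rw [Finset.sdiff_eq_empty_iff_subset.2 (Finset.singleton_subset_iff.2 h)] at c1
      simp at c1
    rw [Finset.erase_insert (by simp [hiJ]), Finset.insert_erase (hJ.2 hqC)]
  · intro I hI
    rfl

/-! ### Exterior algebra part -/

/-- Ordered wedge over a list of indices. -/
def lw (n : ℕ) (l : List ℕ) : ExteriorAlgebra ℝ (Fin (2 * n) → ℝ) :=
  (l.map fun a => ExteriorAlgebra.ι ℝ (stdE n a)).prod

theorem lw_append (n : ℕ) (l₁ l₂ : List ℕ) : lw n (l₁ ++ l₂) = lw n l₁ * lw n l₂ := by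
  simp [lw]

theorem lw_cons (n a : ℕ) (l : List ℕ) :
    lw n (a :: l) = ExteriorAlgebra.ι ℝ (stdE n a) * lw n l := by
  simp [lw]

theorem finsetWedge_eq {n k : ℕ} {I : Finset ℕ} (hI : I.card = k) :
    finsetWedge n k I = lw n (I.sort (· ≤ ·)) := by
  unfold finsetWedge lw
  rw [ExteriorAlgebra.ιMulti_apply]
  congr 1
  apply List.ext_getElem
  · simp [hI]
  · intro m h1 h2
    simp only [List.length_map] at h2
    simp only [List.getElem_ofFn, List.getElem_map]
    rw [List.getD_eq_getElem _ _ h2]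

theorem lw_eq_zero {n : ℕ} {l : List ℕ} (h : ¬ l.Nodup) : lw n l = 0 := by
  have e : lw n l = ExteriorAlgebra.ιMulti ℝ l.length (fun p => stdE n (l.get p)) := by
    rw [ExteriorAlgebra.ιMulti_apply]
    unfold lw
    congr 1
    apply List.ext_getElem
    · simp
    · intro m h1 h2
      simp
  rw [List.nodup_iff_injective_get] at h
  unfold Function.Injective at h
  push Not at h
  obtain ⟨a, b, hab, hne⟩ := h
  rw [e]
  exact AlternatingMap.map_eq_zero_of_eq _ _ (by simp only [hab]) hne

theorem lw_rot (n a : ℕ) (l : List ℕ) :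
    lw n (l ++ [a]) = (-1 : ℝ) ^ l.length • lw n (a :: l) := by
  induction l with
  | nil => simp
  | cons b l ih =>
    have hsw : ExteriorAlgebra.ι ℝ (stdE n b) * ExteriorAlgebra.ι ℝ (stdE n a) =
        - (ExteriorAlgebra.ι ℝ (stdE n a) * ExteriorAlgebra.ι ℝ (stdE n b)) :=
      eq_neg_of_add_eq_zero_left (ExteriorAlgebra.ι_add_mul_swap _ _)
    rw [List.cons_append, lw_cons, ih, lw_cons, lw_cons, lw_cons, mul_smul_comm, ← mul_assoc, hsw,
      List.length_cons, pow_succ]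
    simp [mul_assoc]

theorem lw_sorted {l : List ℕ} {J : Finset ℕ} (hl : l.Pairwise (· < ·))
    (hJ : ∀ x, x ∈ J ↔ x ∈ l) : J.sort (· ≤ ·) = l := by
  have hnd : l.Nodup := hl.imp (fun h => ne_of_lt h)
  have : J = l.toFinset := by ext x; simp [hJ]
  rw [this]
  exact List.toFinset_sort (· ≤ ·) hnd |>.2 (hl.imp le_of_lt)

theorem lamU_ne {n i : ℕ} {t : ℝ} {a : ℕ} (hi1 : 1 ≤ i) (hi2 : i ≤ 2 * n) (ha : a ≠ i) :
    lamU n i t (stdE n a) = stdE n a := by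
  ext b
  unfold lamU lamGen
  rw [Matrix.mulVecLin_apply]
  simp only [Matrix.mulVec, dotProduct, Matrix.transpose_apply, Matrix.add_apply,
    Matrix.smul_apply, add_mul, Finset.sum_add_distrib]
  have h1 : ∑ x, (1 : Matrix (Fin (2*n)) (Fin (2*n)) ℝ) x b * stdE n a x = stdE n a b := by
    simp [Matrix.one_apply]
  have h2 : ∑ x, t • frakU n i x b * stdE n a x = 0 := by
    apply Finset.sum_eq_zero
    intro x _
    by_cases hx : (x : ℕ) + 1 = a
    · have : frakU n i x b = 0 := by
        unfold frakU
        split_ifs <;> first | omega | simp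
      simp [this]
    · simp [stdE, hx]
  rw [h1, h2, add_zero]

/-- Sign for the successor. -/
def sgS (n i : ℕ) : ℝ := if i = 2 * n then (-1) ^ n else 1

/-- Sign for the predecessor. -/
def sgP (n i : ℕ) : ℝ := if i = 1 then (-1) ^ n else 1

theorem lamU_self {n i : ℕ} {t : ℝ} (hn : 2 ≤ n) (hi1 : 1 ≤ i) (hi2 : i ≤ 2 * n) :
    lamU n i t (stdE n i) = stdE n i +
      t • (sgS n i • stdE n (cyS n i) + sgP n i • stdE n (cyP n i)) := by
  ext b
  unfold lamU lamGen
  rw [Matrix.mulVecLin_apply]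
  simp only [Matrix.mulVec, dotProduct, Matrix.transpose_apply, Matrix.add_apply,
    Matrix.smul_apply, add_mul, Finset.sum_add_distrib]
  have h1 : ∑ x, (1 : Matrix (Fin (2*n)) (Fin (2*n)) ℝ) x b * stdE n i x = stdE n i b := by
    simp [Matrix.one_apply]
  have hb := b.isLt
  have h2 : ∑ x, t • frakU n i x b * stdE n i x =
      t * (sgS n i * stdE n (cyS n i) b + sgP n i * stdE n (cyP n i) b) := by
    rw [Finset.sum_eq_single (⟨i - 1, by omega⟩ : Fin (2 * n))]
    · have e : stdE n i (⟨i - 1, by omega⟩ : Fin (2 * n)) = 1 := by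
        simp only [stdE]
        rw [if_pos (by omega)]
      rw [e, mul_one, smul_eq_mul]
      congr 1
      unfold frakU sgS sgP stdE cyS cyP
      by_cases c1 : i = 1
      · subst c1
        have : ¬ (1 = 2 * n) := by omega
        simp only [this, if_true, if_false, true_and]
        split_ifs <;> first | omega | simp
      · by_cases c2 : i = 2 * n
        · simp only [c2, if_true]
          have : ¬ (2 * n = 1) := by omega
          simp only [this, if_false, true_and]
          split_ifs <;> first | omega | simp
        · simp only [c1, c2, if_false]
          split_ifs <;> first | omega | simp
    · intro x _ hx
      have : ¬ ((x : ℕ) + 1 = i) := by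
        intro h
        apply hx
        ext
        simp only
        omega
      simp [stdE, this]
    · simp
  rw [h1, h2]
  simp [mul_add]

theorem map_lw_ne {n i : ℕ} {t : ℝ} (hi1 : 1 ≤ i) (hi2 : i ≤ 2 * n) {l : List ℕ} (h : i ∉ l) :
    ExteriorAlgebra.map (lamU n i t) (lw n l) = lw n l := by
  induction l with
  | nil => simp [lw]
  | cons a l ih =>
    rw [List.mem_cons, not_or] at h
    rw [lw_cons, map_mul, ih h.2, ExteriorAlgebra.map_apply_ι, lamU_ne hi1 hi2 (Ne.symm h.1)]

theorem swap_q {n i : ℕ} (hn : 2 ≤ n) {I : Finset ℕ} (hI : I ⊆ Finset.Icc 1 (2 * n))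
    (hc : I.card = n - 1) {l₁ l₂ : List ℕ}
    (hs : I.sort (· ≤ ·) = l₁ ++ i :: l₂) :
    sgS n i • lw n (l₁ ++ cyS n i :: l₂) =
      if cyS n i ∈ I then 0 else finsetWedge n (n - 1) (insert (cyS n i) (I.erase i)) := by
  have hmem : ∀ x, x ∈ I ↔ x ∈ l₁ ∨ x = i ∨ x ∈ l₂ := by
    intro x
    rw [← Finset.mem_sort (· ≤ ·), hs]; simp
  have hpw : (l₁ ++ i :: l₂).Pairwise (· < ·) := hs ▸ I.sortedLT_sort.pairwise
  have hiI : i ∈ I := (hmem i).2 (by simp)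
  have hlen : l₁.length + l₂.length + 1 = n - 1 := by
    rw [← hc, ← Finset.length_sort (· ≤ ·), hs]; simp; omega
  rw [List.pairwise_append, List.pairwise_cons] at hpw
  obtain ⟨p1, ⟨p2, p3⟩, p4⟩ := hpw
  have hr : ∀ x ∈ I, 1 ≤ x ∧ x ≤ 2 * n := fun x hx => Finset.mem_Icc.1 (hI hx)
  have hqi : cyS n i ≠ i := by unfold cyS; split_ifs <;> omega
  split_ifs with hq
  · rw [lw_eq_zero, smul_zero]
    intro hnd
    rw [List.nodup_append, List.nodup_cons] at hnd
    rcases (hmem _).1 hq with h | h | h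
    · exact hnd.2.2 _ h _ (by simp) rfl
    · exact hqi h
    · exact hnd.2.1.1 h
  · have hq1 : cyS n i ∉ l₁ := fun h => hq ((hmem _).2 (Or.inl h))
    have hq2 : cyS n i ∉ l₂ := fun h => hq ((hmem _).2 (Or.inr (Or.inr h)))
    have hcard : (insert (cyS n i) (I.erase i)).card = n - 1 := by
      rw [Finset.card_insert_of_notMem (by simp [hq]), Finset.card_erase_of_mem hiI]
      omega
    rw [finsetWedge_eq hcard]
    have hmem' : ∀ x, x ∈ insert (cyS n i) (I.erase i) ↔ x ∈ l₁ ∨ x = cyS n i ∨ x ∈ l₂ := by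
      intro x
      rw [Finset.mem_insert, Finset.mem_erase, hmem]
      have a1 : x ∈ l₁ → x ≠ i := fun h => ne_of_lt (p4 x h i (by simp))
      have a2 : x ∈ l₂ → x ≠ i := fun h => (ne_of_lt (p2 x h)).symm
      tauto
    by_cases hi : i = 2 * n
    · have hl2 : l₂ = [] := by
        rw [List.eq_nil_iff_forall_not_mem]
        intro x hx
        have a := p2 x hx
        have b := hr x ((hmem x).2 (Or.inr (Or.inr hx)))
        omega
      subst hl2
      have hcy : cyS n i = 1 := by simp [cyS, hi]
      have hsort : (insert (cyS n i) (I.erase i)).sort (· ≤ ·) = cyS n i :: l₁ := by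
        apply lw_sorted
        · rw [List.pairwise_cons]
          refine ⟨fun x hx => ?_, p1⟩
          have b := hr x ((hmem x).2 (Or.inl hx))
          have c : x ≠ cyS n i := fun h => hq1 (h ▸ hx)
          omega
        · intro x
          rw [hmem']
          simp
          tauto
      rw [hsort, lw_rot, smul_smul, sgS, if_pos hi, ← pow_add]
      have : n + l₁.length = 2 * (n - 1) := by simp at hlen; omega
      rw [this, pow_mul]
      simp
    · have hcy : cyS n i = i + 1 := by simp [cyS, hi]
      rw [sgS, if_neg hi, one_smul]
      congr 1
      symm
      apply lw_sorted
      · rw [List.pairwise_append, List.pairwise_cons]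
        refine ⟨p1, ⟨fun x hx => ?_, p3⟩, fun x hx y hy => ?_⟩
        · have a := p2 x hx
          have c : x ≠ cyS n i := fun h => hq2 (h ▸ hx)
          omega
        · rcases List.mem_cons.1 hy with rfl | hy
          · have := p4 x hx i (by simp)
            omega
          · exact p4 x hx y (by simp [hy])
      · intro x
        rw [hmem']
        simp

theorem swap_p {n i : ℕ} (hn : 2 ≤ n) {I : Finset ℕ} (hI : I ⊆ Finset.Icc 1 (2 * n))
    (hc : I.card = n - 1) {l₁ l₂ : List ℕ}
    (hs : I.sort (· ≤ ·) = l₁ ++ i :: l₂) :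
    sgP n i • lw n (l₁ ++ cyP n i :: l₂) =
      if cyP n i ∈ I then 0 else finsetWedge n (n - 1) (insert (cyP n i) (I.erase i)) := by
  have hmem : ∀ x, x ∈ I ↔ x ∈ l₁ ∨ x = i ∨ x ∈ l₂ := by
    intro x
    rw [← Finset.mem_sort (· ≤ ·), hs]; simp
  have hpw : (l₁ ++ i :: l₂).Pairwise (· < ·) := hs ▸ I.sortedLT_sort.pairwise
  have hiI : i ∈ I := (hmem i).2 (by simp)
  have hlen : l₁.length + l₂.length + 1 = n - 1 := by
    rw [← hc, ← Finset.length_sort (· ≤ ·), hs]; simp; omega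
  rw [List.pairwise_append, List.pairwise_cons] at hpw
  obtain ⟨p1, ⟨p2, p3⟩, p4⟩ := hpw
  have hr : ∀ x ∈ I, 1 ≤ x ∧ x ≤ 2 * n := fun x hx => Finset.mem_Icc.1 (hI hx)
  have hir := hr i hiI
  have hqi : cyP n i ≠ i := by unfold cyP; split_ifs <;> omega
  split_ifs with hq
  · rw [lw_eq_zero, smul_zero]
    intro hnd
    rw [List.nodup_append, List.nodup_cons] at hnd
    rcases (hmem _).1 hq with h | h | h
    · exact hnd.2.2 _ h _ (by simp) rfl
    · exact hqi h
    · exact hnd.2.1.1 h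
  · have hq1 : cyP n i ∉ l₁ := fun h => hq ((hmem _).2 (Or.inl h))
    have hq2 : cyP n i ∉ l₂ := fun h => hq ((hmem _).2 (Or.inr (Or.inr h)))
    have hcard : (insert (cyP n i) (I.erase i)).card = n - 1 := by
      rw [Finset.card_insert_of_notMem (by simp [hq]), Finset.card_erase_of_mem hiI]
      omega
    rw [finsetWedge_eq hcard]
    have hmem' : ∀ x, x ∈ insert (cyP n i) (I.erase i) ↔ x ∈ l₁ ∨ x = cyP n i ∨ x ∈ l₂ := by
      intro x
      rw [Finset.mem_insert, Finset.mem_erase, hmem]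
      have a1 : x ∈ l₁ → x ≠ i := fun h => ne_of_lt (p4 x h i (by simp))
      have a2 : x ∈ l₂ → x ≠ i := fun h => (ne_of_lt (p2 x h)).symm
      tauto
    by_cases hi : i = 1
    · have hl1 : l₁ = [] := by
        rw [List.eq_nil_iff_forall_not_mem]
        intro x hx
        have a := p4 x hx i (by simp)
        have b := hr x ((hmem x).2 (Or.inl hx))
        omega
      subst hl1
      have hcy : cyP n i = 2 * n := by simp [cyP, hi]
      have hsort : (insert (cyP n i) (I.erase i)).sort (· ≤ ·) = l₂ ++ [cyP n i] := by
        apply lw_sorted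
        · rw [List.pairwise_append]
          refine ⟨p3, by simp, fun x hx y hy => ?_⟩
          have b := hr x ((hmem x).2 (Or.inr (Or.inr hx)))
          have c : x ≠ cyP n i := fun h => hq2 (h ▸ hx)
          rw [List.mem_singleton] at hy
          omega
        · intro x
          rw [hmem']
          simp
          tauto
      rw [hsort, lw_rot, List.nil_append, sgP, if_pos hi]
      have : n = l₂.length + 2 := by simp at hlen; omega
      rw [this, pow_add]
      simp
    · have hcy : cyP n i = i - 1 := by simp [cyP, hi]
      rw [sgP, if_neg hi, one_smul]
      congr 1
      symm
      apply lw_sorted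
      · rw [List.pairwise_append, List.pairwise_cons]
        refine ⟨p1, ⟨fun x hx => ?_, p3⟩, fun x hx y hy => ?_⟩
        · have a := p2 x hx
          omega
        · rcases List.mem_cons.1 hy with rfl | hy
          · have := p4 x hx i (by simp)
            have c : x ≠ cyP n i := fun h => hq1 (h ▸ hx)
            omega
          · exact p4 x hx y (by simp [hy])
      · intro x
        rw [hmem']
        simp

theorem map_wedge_ne {n i : ℕ} {t : ℝ} (hi1 : 1 ≤ i) (hi2 : i ≤ 2 * n) {I : Finset ℕ}
    (hc : I.card = n - 1) (h : i ∉ I) :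
    ExteriorAlgebra.map (lamU n i t) (finsetWedge n (n - 1) I) = finsetWedge n (n - 1) I := by
  rw [finsetWedge_eq hc, map_lw_ne hi1 hi2 (by simpa using h)]

theorem map_wedge_mem {n i : ℕ} {t : ℝ} (hn : 2 ≤ n) (hi1 : 1 ≤ i) (hi2 : i ≤ 2 * n)
    {I : Finset ℕ} (hI : I ⊆ Finset.Icc 1 (2 * n)) (hc : I.card = n - 1) (h : i ∈ I) :
    ExteriorAlgebra.map (lamU n i t) (finsetWedge n (n - 1) I) = finsetWedge n (n - 1) I +
      t • ((if cyS n i ∈ I then 0 else finsetWedge n (n - 1) (insert (cyS n i) (I.erase i))) +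
        (if cyP n i ∈ I then 0 else finsetWedge n (n - 1) (insert (cyP n i) (I.erase i)))) := by
  obtain ⟨l₁, l₂, hs⟩ := List.append_of_mem ((Finset.mem_sort (· ≤ ·)).2 h)
  rw [← swap_q hn hI hc hs, ← swap_p hn hI hc hs, finsetWedge_eq hc, hs]
  have hnd : (l₁ ++ i :: l₂).Nodup := hs ▸ Finset.sort_nodup I _
  rw [List.nodup_append, List.nodup_cons] at hnd
  have n1 : i ∉ l₁ := fun h => hnd.2.2 _ h _ (by simp) rfl
  have n2 : i ∉ l₂ := hnd.2.1.1
  simp only [lw_append, lw_cons, map_mul, map_lw_ne hi1 hi2 n1, map_lw_ne hi1 hi2 n2,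
    ExteriorAlgebra.map_apply_ι, lamU_self hn hi1 hi2, map_add, map_smul, mul_add, add_mul,
    smul_mul_assoc, mul_smul_comm, smul_add]

theorem main_aux {n : ℕ} (hn : 2 ≤ n) (t : ℝ) {i : ℕ} (hi1 : 1 ≤ i) (hi2 : i ≤ 2 * n)
    {σ σd τ τd : Finset (Finset ℕ)}
    (hst : ∃ B₀ Cp Cq : Finset ℕ, ∃ R : Finset (Finset ℕ),
      (∀ B, B ∈ σ ∪ σd ↔ B = B₀ ∨ B = Cp ∨ B = Cq ∨ B ∈ R) ∧
      (∀ B, B ∈ τ ∪ τd ↔ B = {i} ∨ B = B₀.erase i ∨ B = Cp ∪ Cq ∨ B ∈ R) ∧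
      i ∈ B₀ ∧ cyP n i ∈ Cp ∧ cyS n i ∈ Cq ∧ i ∉ Cp ∧ i ∉ Cq ∧ Disjoint Cp Cq ∧
      cyP n i ∉ B₀ ∧ cyS n i ∉ B₀ ∧
      (∀ B ∈ R, i ∉ B ∧ cyP n i ∉ B ∧ cyS n i ∉ B)) :
    ExteriorAlgebra.map (lamU n i t) (concVec n σ σd) =
      concVec n σ σd + t • concVec n τ τd := by
  obtain ⟨B₀, Cp, Cq, R, h1, h2, hiB, hpC, hqC, hip, hiq, hd, hpB, hqB, hR⟩ := hst
  have hi : i ∈ Finset.Icc 1 (2 * n) := Finset.mem_Icc.2 ⟨hi1, hi2⟩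
  have hp : cyP n i ∈ Finset.Icc 1 (2 * n) := by
    rw [Finset.mem_Icc]; unfold cyP; split_ifs <;> omega
  have hq : cyS n i ∈ Finset.Icc 1 (2 * n) := by
    rw [Finset.mem_Icc]; unfold cyS; split_ifs <;> omega
  have sq := sum_half (finsetWedge n (n - 1)) n (n - 1) i (cyS n i) h1 h2 hi hq hiB hqC hip hiq hd
    hqB (fun B hB => ⟨(hR B hB).1, (hR B hB).2.2⟩)
  have sp := sum_half (finsetWedge n (n - 1)) n (n - 1) i (cyP n i) (Cp := Cq) (Cq := Cp)
    (σ := σ) (σd := σd) (τ := τ) (τd := τd) (B₀ := B₀) (R := R)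
    (fun B => by rw [h1]; tauto) (fun B => by rw [h2, Finset.union_comm]) hi hp hiB hpC hiq hip
    hd.symm hpB (fun B hB => ⟨(hR B hB).1, (hR B hB).2.1⟩)
  unfold concVec
  rw [← Finset.sum_filter_add_sum_filter_not (((Finset.Icc 1 (2 * n)).powersetCard
    (n - 1)).filter (ConcordantWith τ τd)) (fun J => Cq ⊆ J)]
  have hnot : (((Finset.Icc 1 (2 * n)).powersetCard (n - 1)).filter
      (ConcordantWith τ τd)).filter (fun J => ¬ Cq ⊆ J) =
      (((Finset.Icc 1 (2 * n)).powersetCard (n - 1)).filter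
      (ConcordantWith τ τd)).filter (fun J => Cp ⊆ J) := by
    apply Finset.filter_congr
    intro J hJ
    have hE := (Finset.mem_filter.1 hJ).2 (Cp ∪ Cq) ((h2 _).2 (by simp))
    rw [Finset.union_sdiff_distrib, Finset.card_union_of_disjoint
      (hd.mono Finset.sdiff_subset Finset.sdiff_subset)] at hE
    rw [← Finset.sdiff_eq_empty_iff_subset, ← Finset.sdiff_eq_empty_iff_subset,
      ← Finset.card_eq_zero, ← Finset.card_eq_zero]
    omega
  rw [hnot, ← sq, ← sp, map_sum, Finset.sum_filter (fun I => i ∈ I ∧ cyS n i ∉ I),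
    Finset.sum_filter (fun I => i ∈ I ∧ cyP n i ∉ I), ← Finset.sum_add_distrib, Finset.smul_sum,
    ← Finset.sum_add_distrib]
  apply Finset.sum_congr rfl
  intro I hI
  obtain ⟨hsub, hc⟩ := Finset.mem_powersetCard.1 (Finset.mem_filter.1 hI).1
  by_cases h : i ∈ I
  · rw [map_wedge_mem hn hi1 hi2 hsub hc h]
    by_cases a : cyS n i ∈ I <;> by_cases b : cyP n i ∈ I <;> simp [a, b, h]
  · rw [map_wedge_ne hi1 hi2 hc h]
    simp [h]

theorem lam_generators_on_concordance_basis (n : ℕ) (hn : 2 ≤ n) (t : ℝ)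
    (i : ℕ) (hi1 : 1 ≤ i) (hi2 : i ≤ 2 * n)
    (σ σd : Finset (Finset ℕ)) (hσ : IsNCPair n σ σd) :
    (IsolatedIn σ σd i →
      ExteriorAlgebra.map (lamU n i t) (concVec n σ σd) = concVec n σ σd) ∧
    (¬ IsolatedIn σ σd i →
      ∀ τ τd : Finset (Finset ℕ), IsNCPair n τ τd →
        ((i % 2 = 1 ∧ τ = isolate σ i) ∨ (i % 2 = 0 ∧ τd = isolate σd i)) →
        ExteriorAlgebra.map (lamU n i t) (concVec n σ σd) =
          concVec n σ σd + t • concVec n τ τd) := by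
  constructor
  · intro hiso
    have hmem : {i} ∈ σ ∪ σd := by
      unfold IsolatedIn at hiso
      rw [Finset.mem_union]
      split_ifs at hiso
      · exact Or.inl hiso
      · exact Or.inr hiso
    unfold concVec
    rw [map_sum]
    apply Finset.sum_congr rfl
    intro I hI
    obtain ⟨hI1, hI2⟩ := Finset.mem_filter.1 hI
    obtain ⟨hsub, hc⟩ := Finset.mem_powersetCard.1 hI1
    apply map_wedge_ne hi1 hi2 hc
    intro h
    have c1 := hI2 {i} hmem
    rw [Finset.sdiff_eq_empty_iff_subset.2 (Finset.singleton_subset_iff.2 h)] at c1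
    simp at c1
  · intro hiso τ τd hτ hcase
    apply main_aux hn t hi1 hi2
    rcases hcase with ⟨hodd, rfl⟩ | ⟨heven, rfl⟩
    · refine structure_lemma (wpair_odd hσ) (wpair_odd hτ) hn hσ.2.2.2.2.2 hτ.2.2.2.2.2
        ⟨hi1, hi2⟩ hodd ?_ rfl
      simpa [IsolatedIn, hodd] using hiso
    · have h1 := hσ.2.2.2.2.2
      have h2 := hτ.2.2.2.2.2
      rw [Finset.union_comm σ, Finset.union_comm τ]
      refine structure_lemma (wpair_even hσ) (wpair_even hτ) hn (by omega) (by omega)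
        ⟨hi1, hi2⟩ heven ?_ rfl
      simpa [IsolatedIn, heven] using hiso
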